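/- Let p be a prime, let M be a Lie algebra over ℚ_p, let L ⊆ M be a ℤ_p-Lie subalgebra which is nilpotent of nilpotency class c ≥ 1, finitely generated as a ℤ_p-module, and let I be a Lie ideal of L such that the quotient module L/I is finite. Define L̂ = L + p^{-1}·γ_2(L) + ⋯ + p^{-(c-1)}·γ_c(L) and Î = I + p^{-1}·[I,L] + ⋯ + p^{-(c-1)}·[I, _{c-1}L]. Then the quotient ℤ_p-Lie algebra L̂/Î is finite, powerful and p-central, and it has the Ω-extension property; more precisely, the quotient L̂/(p·Î) is a p-central ℤ_p-Lie algebra, Ω₁(L̂/(p·Î)) = Î/(p·Î), and the quotient of L̂/(p·Î) by Ω₁(L̂/(p·Î)) is isomorphic, as a ℤ_p-Lie algebra, to L̂/Î. -/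

import Mathlib

/-!
Everything follows from the inclusion `⁅Î, L̂⁆ ⊆ p·Î` (`lie_IhatDef_LhatDef`). By the Jacobi
identity `⁅[I, _i L], γ_{j+1}(L)⁆ ⊆ [I, _{i+j+1} L]` (`lie_leftIter_gammaS`), so the bracket of the
`i`-th summand of `Î` with the `j`-th summand of `L̂` carries the scalar `p⁻⁽ⁱ⁺ʲ⁾` but sits one step
deeper, which leaves a factor `p` to spare; the terms with `i + j + 1 ≥ c` vanish by nilpotency.

The case `I = L` gives `⁅L̂, L̂⁆ ⊆ p·L̂`, that is, powerfulness. As `M` is `p`-torsion-free,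
`p·x ∈ Î` implies `p·⁅x, y⁆ = ⁅p·x, y⁆ ∈ p·Î` and hence `⁅x, y⁆ ∈ Î`; likewise `p·x ∈ p·Î` is
equivalent to `x ∈ Î`, which describes `Ω₁(L̂/(p·Î))` and gives its centrality. Finiteness holds
because `L̂` is finitely generated over `ℤ_[p]` and `L̂/Î` is killed by a positive integer.
-/

open Pointwise

/-- For `Z_p`-submodules `A B` of `M`, the `Z_p`-submodule spanned by brackets `⁅x, y⁆` with
`x ∈ A`, `y ∈ B`. -/
def bracketSpan (R M : Type*) [CommRing R] [LieRing M] [Module R M]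
    (A B : Submodule R M) : Submodule R M :=
  Submodule.span R {z : M | ∃ x ∈ A, ∃ y ∈ B, z = ⁅x, y⁆}

/-- The lower central series of a submodule `S` closed under the bracket:
`gammaS R M S (i - 1)` is `γ_i(S)`, i.e. `gammaS R M S 0 = S = γ_1(S)` and
`gammaS R M S i = γ_{i+1}(S) = ⁅γ_i(S), S⁆`. -/
def gammaS (R M : Type*) [CommRing R] [LieRing M] [Module R M]
    (S : Submodule R M) : ℕ → Submodule R M
  | 0 => S
  | i + 1 => bracketSpan R M (gammaS R M S i) S

/-- The left-normed iterated bracket: `leftIter R M I S i = [I, S, …, S]` with `i` copies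
of `S`. -/
def leftIter (R M : Type*) [CommRing R] [LieRing M] [Module R M]
    (I S : Submodule R M) : ℕ → Submodule R M
  | 0 => I
  | i + 1 => bracketSpan R M (leftIter R M I S i) S

/-- `LhatDef p M L c = L + p⁻¹·γ_2(L) + p⁻²·γ_3(L) + ⋯ + p^{-(c-1)}·γ_c(L)` as a
`ℤ_[p]`-submodule of `M`. -/
noncomputable def LhatDef (p : ℕ) [Fact p.Prime] (M : Type*) [LieRing M]
    [LieAlgebra ℚ_[p] M] [Module ℤ_[p] M] [IsScalarTower ℤ_[p] ℚ_[p] M]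
    (L : Submodule ℤ_[p] M) (c : ℕ) : Submodule ℤ_[p] M :=
  ⨆ i ∈ Finset.range c, (((p : ℚ_[p]) ^ i)⁻¹) • gammaS ℤ_[p] M L i

/-- `IhatDef p M I L c = I + p⁻¹·[I,L] + p⁻²·[I,L,L] + ⋯ + p^{-(c-1)}·[I, _(c-1) L]` as a
`ℤ_[p]`-submodule of `M`. -/
noncomputable def IhatDef (p : ℕ) [Fact p.Prime] (M : Type*) [LieRing M]
    [LieAlgebra ℚ_[p] M] [Module ℤ_[p] M] [IsScalarTower ℤ_[p] ℚ_[p] M]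
    (I L : Submodule ℤ_[p] M) (c : ℕ) : Submodule ℤ_[p] M :=
  ⨆ i ∈ Finset.range c, (((p : ℚ_[p]) ^ i)⁻¹) • leftIter ℤ_[p] M I L i

/-- The `ℤ_[p]`-action on `M` is the restriction of the `ℚ_[p]`-action. -/
lemma padicInt_smul_eq (p : ℕ) [Fact p.Prime] {M : Type*} [AddCommGroup M]
    [Module ℚ_[p] M] [Module ℤ_[p] M] [IsScalarTower ℤ_[p] ℚ_[p] M] (a : ℤ_[p]) (x : M) :
    a • x = (a : ℚ_[p]) • x := by
  rw [← algebraMap_smul ℚ_[p] a x]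
  rfl

lemma bracketSpan_le {R M : Type*} [CommRing R] [LieRing M] [Module R M]
    {A B C : Submodule R M} (h : ∀ x ∈ A, ∀ y ∈ B, ⁅x, y⁆ ∈ C) : bracketSpan R M A B ≤ C := by
  refine Submodule.span_le.2 ?_
  rintro z ⟨x, hx, y, hy, rfl⟩
  exact h x hx y hy

lemma lie_mem_bracketSpan {R M : Type*} [CommRing R] [LieRing M] [Module R M]
    {A B : Submodule R M} {x y : M} (hx : x ∈ A) (hy : y ∈ B) : ⁅x, y⁆ ∈ bracketSpan R M A B :=
  Submodule.subset_span ⟨x, hx, y, hy, rfl⟩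

lemma leftIter_self {R M : Type*} [CommRing R] [LieRing M] [Module R M]
    (S : Submodule R M) (i : ℕ) : leftIter R M S S i = gammaS R M S i := by
  induction i with
  | zero => rfl
  | succ i ih => simp only [leftIter, gammaS, ih]

lemma leftIter_le_gammaS {R M : Type*} [CommRing R] [LieRing M] [Module R M]
    {I S : Submodule R M} (h : I ≤ S) (i : ℕ) : leftIter R M I S i ≤ gammaS R M S i := by
  induction i with
  | zero => exact h
  | succ i ih => exact bracketSpan_le fun x hx y hy => lie_mem_bracketSpan (ih hx) hy

lemma gammaS_le {R M : Type*} [CommRing R] [LieRing M] [Module R M]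
    {S : Submodule R M} (hS : ∀ x ∈ S, ∀ y ∈ S, ⁅x, y⁆ ∈ S) (i : ℕ) : gammaS R M S i ≤ S := by
  induction i with
  | zero => exact le_rfl
  | succ i ih => exact bracketSpan_le fun x hx y hy => hS x (ih hx) y hy

lemma gammaS_eq_bot {R M : Type*} [CommRing R] [LieRing M] [Module R M]
    {S : Submodule R M} {c : ℕ} (hc : gammaS R M S c = ⊥) {n : ℕ} (hn : c ≤ n) :
    gammaS R M S n = ⊥ := by
  induction n, hn using Nat.le_induction with
  | base => exact hc
  | succ n _ ih =>
    refine eq_bot_iff.2 (bracketSpan_le fun x hx y _ => ?_)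
    rw [ih, Submodule.mem_bot] at hx
    simp [hx]

/-- `⁅[I, _i L], γ_{j+1}(L)⁆ ⊆ [I, _{i+j+1} L]`, by the Jacobi identity
`⁅a, ⁅u, s⁆⁆ = ⁅⁅a, u⁆, s⁆ - ⁅⁅a, s⁆, u⁆`. -/
lemma lie_leftIter_gammaS (p : ℕ) [Fact p.Prime] {M : Type*}
    [LieRing M] [LieAlgebra ℚ_[p] M] [Module ℤ_[p] M] [IsScalarTower ℤ_[p] ℚ_[p] M]
    (I L : Submodule ℤ_[p] M) (j : ℕ) : ∀ (i : ℕ) (x : M), x ∈ leftIter ℤ_[p] M I L i →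
      ∀ y ∈ gammaS ℤ_[p] M L j, ⁅x, y⁆ ∈ leftIter ℤ_[p] M I L (i + j + 1) := by
  induction j with
  | zero => exact fun i x hx y hy => lie_mem_bracketSpan hx hy
  | succ j ih =>
    intro i x hx y hy
    induction hy using Submodule.span_induction with
    | mem z hz =>
      obtain ⟨u, hu, s, hs, rfl⟩ := hz
      rw [leibniz_lie, ← lie_skew u, ← sub_eq_add_neg]
      refine sub_mem (lie_mem_bracketSpan (ih i x hx u hu) hs) ?_
      have := ih (i + 1) ⁅x, s⁆ (lie_mem_bracketSpan hx hs) u hu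
      rwa [show i + 1 + j + 1 = i + (j + 1) + 1 by ring] at this
    | zero => simp
    | add y z _ _ hy hz => rw [lie_add]; exact add_mem hy hz
    | smul a z _ hz =>
      rw [padicInt_smul_eq p a z, lie_smul, ← padicInt_smul_eq p a]
      exact Submodule.smul_mem _ a hz

/-- A member of `p⁻ⁱ·[I, _i L]` lies in `Î` for every `i`: beyond the range of the sum defining
`Î` the term vanishes by nilpotency. -/
lemma mem_IhatDef (p : ℕ) [Fact p.Prime] {M : Type*}
    [LieRing M] [LieAlgebra ℚ_[p] M] [Module ℤ_[p] M] [IsScalarTower ℤ_[p] ℚ_[p] M]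
    {I L : Submodule ℤ_[p] M} (hIL : I ≤ L) {c : ℕ} (hnil : gammaS ℤ_[p] M L c = ⊥)
    {i : ℕ} {x : M} (hx : x ∈ leftIter ℤ_[p] M I L i) :
    ((p : ℚ_[p]) ^ i)⁻¹ • x ∈ IhatDef p M I L c := by
  by_cases hi : i < c
  · exact Submodule.mem_iSup_of_mem i (Submodule.mem_iSup_of_mem (Finset.mem_range.2 hi)
      (Submodule.smul_mem_pointwise_smul _ _ _ hx))
  · have := leftIter_le_gammaS hIL i hx
    rw [gammaS_eq_bot hnil (not_lt.1 hi), Submodule.mem_bot] at this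
    simp [this]

lemma IhatDef_le (p : ℕ) [Fact p.Prime] {M : Type*}
    [LieRing M] [LieAlgebra ℚ_[p] M] [Module ℤ_[p] M] [IsScalarTower ℤ_[p] ℚ_[p] M]
    {I L C : Submodule ℤ_[p] M} {c : ℕ}
    (h : ∀ i < c, ∀ x ∈ leftIter ℤ_[p] M I L i, ((p : ℚ_[p]) ^ i)⁻¹ • x ∈ C) :
    IhatDef p M I L c ≤ C := by
  refine iSup₂_le fun i hi => ?_
  rintro _ ⟨x, hx, rfl⟩
  exact h i (Finset.mem_range.1 hi) x hx

lemma LhatDef_eq_IhatDef (p : ℕ) [Fact p.Prime] (M : Type*)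
    [LieRing M] [LieAlgebra ℚ_[p] M] [Module ℤ_[p] M] [IsScalarTower ℤ_[p] ℚ_[p] M]
    (L : Submodule ℤ_[p] M) (c : ℕ) : LhatDef p M L c = IhatDef p M L L c := by
  simp only [LhatDef, IhatDef, leftIter_self]

lemma IhatDef_mono (p : ℕ) [Fact p.Prime] {M : Type*}
    [LieRing M] [LieAlgebra ℚ_[p] M] [Module ℤ_[p] M] [IsScalarTower ℤ_[p] ℚ_[p] M]
    {I L : Submodule ℤ_[p] M} (hIL : I ≤ L) {c : ℕ} (hnil : gammaS ℤ_[p] M L c = ⊥) :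
    IhatDef p M I L c ≤ LhatDef p M L c := by
  rw [LhatDef_eq_IhatDef]
  refine IhatDef_le p fun i _ x hx => mem_IhatDef p le_rfl hnil ?_
  rw [leftIter_self]
  exact leftIter_le_gammaS hIL i hx

/-- The bracket of the summands `p⁻ⁱ·[I, _i L]` and `p⁻ʲ·γ_{j+1}(L)` lies in
`p⁻⁽ⁱ⁺ʲ⁾·[I, _{i+j+1} L]`, which is `p` times a summand of `Î`; hence `⁅Î, L̂⁆ ⊆ p·Î`. -/
lemma lie_IhatDef_LhatDef (p : ℕ) [Fact p.Prime] {M : Type*}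
    [LieRing M] [LieAlgebra ℚ_[p] M] [Module ℤ_[p] M] [IsScalarTower ℤ_[p] ℚ_[p] M]
    {I L : Submodule ℤ_[p] M} (hIL : I ≤ L) {c : ℕ} (hnil : gammaS ℤ_[p] M L c = ⊥)
    {x y : M} (hx : x ∈ IhatDef p M I L c) (hy : y ∈ LhatDef p M L c) :
    ⁅x, y⁆ ∈ (p : ℤ_[p]) • IhatDef p M I L c := by
  have hp : (p : ℚ_[p]) ≠ 0 := Nat.cast_ne_zero.2 (Fact.out : p.Prime).ne_zero
  rw [LhatDef_eq_IhatDef] at hy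
  -- Elements whose bracket with a fixed element lands in a submodule form a submodule.
  let T (z : M) : M →ₗ[ℤ_[p]] M := (LieAlgebra.ad ℚ_[p] M z).restrictScalars ℤ_[p]
  have hT (z w : M) : T z w = ⁅z, w⁆ := rfl
  have key : IhatDef p M L L c ≤ ((p : ℤ_[p]) • IhatDef p M I L c).comap (T x) := by
    refine IhatDef_le p fun j _ v hv => ?_
    rw [leftIter_self] at hv
    rw [Submodule.mem_comap, hT, ← lie_skew, neg_mem_iff]
    have : IhatDef p M I L c ≤ ((p : ℤ_[p]) • IhatDef p M I L c).comap
        (T (((p : ℚ_[p]) ^ j)⁻¹ • v)) := by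
      refine IhatDef_le p fun i _ u hu => ?_
      rw [Submodule.mem_comap, hT, ← lie_skew, neg_mem_iff]
      have h := Submodule.smul_mem_pointwise_smul _ (p : ℤ_[p]) _
        (mem_IhatDef p hIL hnil (lie_leftIter_gammaS p I L j i u hu v hv))
      convert h using 1
      rw [padicInt_smul_eq p (p : ℤ_[p]), smul_lie, lie_smul, smul_smul, smul_smul]
      congr 1
      push_cast
      field_simp
      ring
    exact this hx
  exact key hy

lemma smul_mem_smul_iff (p : ℕ) [Fact p.Prime] {M : Type*} [AddCommGroup M]
    [Module ℚ_[p] M] [Module ℤ_[p] M] [IsScalarTower ℤ_[p] ℚ_[p] M]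
    (N : Submodule ℤ_[p] M) (x : M) : (p : ℤ_[p]) • x ∈ (p : ℤ_[p]) • N ↔ x ∈ N := by
  have hp : (p : ℚ_[p]) ≠ 0 := Nat.cast_ne_zero.2 (Fact.out : p.Prime).ne_zero
  refine ⟨?_, Submodule.smul_mem_pointwise_smul _ _ _⟩
  rintro ⟨y, hy, hyx⟩
  replace hyx : (p : ℤ_[p]) • y = (p : ℤ_[p]) • x := hyx
  rw [padicInt_smul_eq, padicInt_smul_eq] at hyx
  rwa [← smul_right_injective M (by simpa using hp) hyx]

lemma FG_LhatDef (p : ℕ) [Fact p.Prime] {M : Type*}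
    [LieRing M] [LieAlgebra ℚ_[p] M] [Module ℤ_[p] M] [IsScalarTower ℤ_[p] ℚ_[p] M]
    {L : Submodule ℤ_[p] M} (hL : ∀ x ∈ L, ∀ y ∈ L, ⁅x, y⁆ ∈ L) (hfg : L.FG) (c : ℕ) :
    (LhatDef p M L c).FG := by
  have hN : IsNoetherian ℤ_[p] L := isNoetherian_of_fg_of_noetherian L hfg
  refine Submodule.fg_biSup _ _ fun i _ => ?_
  have : (gammaS ℤ_[p] M L i).FG := (isNoetherian_submodule.1 hN) _ (gammaS_le hL i)
  exact this.map _

/-- A finitely generated `ℤ_[p]`-module annihilated by a positive integer is a finitely generated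
module over a finite quotient ring of `ℤ_[p]`. -/
lemma finite_of_natCast_smul (p : ℕ) [Fact p.Prime] (Q : Type*) [AddCommGroup Q]
    [Module ℤ_[p] Q] [Module.Finite ℤ_[p] Q] (n : ℕ) (hn : n ≠ 0)
    (h : ∀ q : Q, (n : ℤ_[p]) • q = 0) : Finite Q := by
  let x : ℤ_[p] := n
  have hx : x ≠ 0 := Nat.cast_ne_zero.2 hn
  -- `n` is a unit times a power of `p`, so that power of `p` annihilates `Q` as well.
  let J : Ideal ℤ_[p] := Ideal.span {(p : ℤ_[p]) ^ x.valuation}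
  have hJ : Module.IsTorsionBySet ℤ_[p] Q (J : Set ℤ_[p]) := by
    refine (Module.isTorsionBySet_span_singleton_iff _).2 fun q => ?_
    have h1 := h q
    rw [show (n : ℤ_[p]) = x from rfl, PadicInt.unitCoeff_spec hx, mul_smul] at h1
    exact (PadicInt.unitCoeff hx).isUnit.smul_eq_zero.1 h1
  have hfin : Finite (ℤ_[p] ⧸ J) := by
    have hker : RingHom.ker (PadicInt.toZModPow (p := p) x.valuation) = J :=
      PadicInt.ker_toZModPow _
    have : NeZero (p ^ x.valuation) := ⟨pow_ne_zero _ (Fact.out : p.Prime).ne_zero⟩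
    rw [← hker]
    exact Finite.of_injective _
      (RingHom.kerLift_injective (PadicInt.toZModPow (p := p) x.valuation))
  let _ : Module (ℤ_[p] ⧸ J) Q := hJ.module
  have : IsScalarTower ℤ_[p] (ℤ_[p] ⧸ J) Q := hJ.isScalarTower
  have : Module.Finite (ℤ_[p] ⧸ J) Q := Module.Finite.of_restrictScalars_finite ℤ_[p] _ _
  exact Module.finite_of_finite (ℤ_[p] ⧸ J)

/-- `n · p^c` annihilates `L̂ / Î` when `n` annihilates `L / I`, as `p^c · L̂ ⊆ L`. -/
lemma finite_quotient (p : ℕ) [Fact p.Prime] {M : Type*}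
    [LieRing M] [LieAlgebra ℚ_[p] M] [Module ℤ_[p] M] [IsScalarTower ℤ_[p] ℚ_[p] M]
    {I L : Submodule ℤ_[p] M} (hL : ∀ x ∈ L, ∀ y ∈ L, ⁅x, y⁆ ∈ L) (hfg : L.FG)
    (hIL : I ≤ L) {c : ℕ} (hnil : gammaS ℤ_[p] M L c = ⊥)
    (hfin : Finite (↥L ⧸ I.comap L.subtype)) :
    Finite (↥(LhatDef p M L c) ⧸ (IhatDef p M I L c).comap (LhatDef p M L c).subtype) := by
  have hp : (p : ℚ_[p]) ≠ 0 := Nat.cast_ne_zero.2 (Fact.out : p.Prime).ne_zero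
  have : Module.Finite ℤ_[p] (LhatDef p M L c) :=
    Module.Finite.iff_fg.2 (FG_LhatDef p hL hfg c)
  have hn : ∀ x ∈ L, (Nat.card (↥L ⧸ I.comap L.subtype) : ℤ_[p]) • x ∈ I := by
    intro x hx
    have h : Nat.card (↥L ⧸ I.comap L.subtype) •
        (Submodule.Quotient.mk ⟨x, hx⟩ : ↥L ⧸ I.comap L.subtype) = 0 := card_nsmul_eq_zero'
    rw [← Nat.cast_smul_eq_nsmul ℤ_[p], ← Submodule.Quotient.mk_smul,
      Submodule.Quotient.mk_eq_zero] at h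
    exact h
  have hI0 : I ≤ IhatDef p M I L c := fun x hx => by
    simpa using mem_IhatDef p hIL hnil (i := 0) hx
  have hle : LhatDef p M L c ≤ L.comap (LinearMap.lsmul ℤ_[p] M ((p : ℤ_[p]) ^ c)) := by
    rw [LhatDef_eq_IhatDef]
    refine IhatDef_le p fun i hi x hx => ?_
    rw [leftIter_self] at hx
    have h := L.smul_mem ((p : ℤ_[p]) ^ (c - i)) (gammaS_le hL i hx)
    rw [Submodule.mem_comap, LinearMap.lsmul_apply]
    convert h using 1
    rw [padicInt_smul_eq p, padicInt_smul_eq p _ x, smul_smul]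
    congr 1
    push_cast
    rw [← pow_sub₀ _ hp hi.le]
  refine finite_of_natCast_smul p _ (Nat.card (↥L ⧸ I.comap L.subtype) * p ^ c)
    (mul_ne_zero Nat.card_pos.ne' (pow_ne_zero _ (Fact.out : p.Prime).ne_zero)) ?_
  intro q
  obtain ⟨x, rfl⟩ := Submodule.Quotient.mk_surjective _ q
  rw [← Submodule.Quotient.mk_smul, Submodule.Quotient.mk_eq_zero]
  have := hI0 (hn _ (hle x.2))
  rw [LinearMap.lsmul_apply, smul_smul] at this
  rw [Submodule.mem_comap]
  push_cast
  exact this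

/-- Let `p` be a prime, `M` a Lie algebra over `ℚ_[p]`, `L ⊆ M` a `ℤ_[p]`-Lie subalgebra,
nilpotent of class `c ≥ 1` and finitely generated as a `ℤ_[p]`-module, and let `I` be a Lie ideal
of `L` with `L/I` finite.  Let `L̂ = LhatDef p M L c` and `Î = IhatDef p M I L c`.  Then the
quotient `L̂/Î` is finite, powerful (`⁅L̂, L̂⁆ ⊆ p·L̂ + Î`) and `p`-central
(`p·x ∈ Î → ⁅x, L̂⁆ ⊆ Î`), and it has the Ω-extension property; more precisely, `L̂/(p·Î)` is
`p`-central, `Ω₁(L̂/(p·Î)) = Î/(p·Î)` (i.e. `p·x ∈ p·Î ↔ x ∈ Î` for `x ∈ L̂`), and the quotient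
of `L̂/(p·Î)` by `Ω₁(L̂/(p·Î))` is isomorphic to `L̂/Î` (an isomorphism commuting with the
canonical projections from `L̂`, hence an isomorphism of `ℤ_[p]`-Lie algebras). -/
theorem Lhat_quotient_Ihat_powerful_pcentral_OmegaEP (p : ℕ) [Fact p.Prime] (M : Type*)
    [LieRing M] [LieAlgebra ℚ_[p] M] [Module ℤ_[p] M] [IsScalarTower ℤ_[p] ℚ_[p] M]
    (L : Submodule ℤ_[p] M) (hL : ∀ x ∈ L, ∀ y ∈ L, ⁅x, y⁆ ∈ L)
    (hfg : L.FG)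
    (c : ℕ) (hc : 1 ≤ c)
    (hnil : gammaS ℤ_[p] M L c = ⊥) (hcl : gammaS ℤ_[p] M L (c - 1) ≠ ⊥)
    (I : Submodule ℤ_[p] M) (hIL : I ≤ L)
    (hI : ∀ x ∈ L, ∀ y ∈ I, ⁅x, y⁆ ∈ I)
    (hfin : Finite (↥L ⧸ I.comap L.subtype)) :
    Finite (↥(LhatDef p M L c) ⧸ (IhatDef p M I L c).comap (LhatDef p M L c).subtype) ∧
    (∀ x ∈ LhatDef p M L c, ∀ y ∈ LhatDef p M L c,
      ⁅x, y⁆ ∈ ((p : ℤ_[p]) • LhatDef p M L c) ⊔ IhatDef p M I L c) ∧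
    (∀ x ∈ LhatDef p M L c, (p : ℤ_[p]) • x ∈ IhatDef p M I L c →
      ∀ y ∈ LhatDef p M L c, ⁅x, y⁆ ∈ IhatDef p M I L c) ∧
    (∀ x ∈ LhatDef p M L c, (p : ℤ_[p]) • x ∈ (p : ℤ_[p]) • IhatDef p M I L c →
      ∀ y ∈ LhatDef p M L c, ⁅x, y⁆ ∈ (p : ℤ_[p]) • IhatDef p M I L c) ∧
    (∀ x ∈ LhatDef p M L c,
      ((p : ℤ_[p]) • x ∈ (p : ℤ_[p]) • IhatDef p M I L c ↔ x ∈ IhatDef p M I L c)) ∧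
    ∃ e : ((↥(LhatDef p M L c) ⧸
              ((p : ℤ_[p]) • IhatDef p M I L c).comap (LhatDef p M L c).subtype) ⧸
            Submodule.map
              (((p : ℤ_[p]) • IhatDef p M I L c).comap (LhatDef p M L c).subtype).mkQ
              ((IhatDef p M I L c).comap (LhatDef p M L c).subtype)) ≃ₗ[ℤ_[p]]
          (↥(LhatDef p M L c) ⧸ (IhatDef p M I L c).comap (LhatDef p M L c).subtype),
      ∀ x : ↥(LhatDef p M L c),
        e (Submodule.Quotient.mk (Submodule.Quotient.mk x)) = Submodule.Quotient.mk x := by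
  refine ⟨finite_quotient p hL hfg hIL hnil hfin, fun x hx y hy => ?_, fun x hx hpx y hy => ?_,
    fun x hx hpx y hy => ?_, fun x _ => smul_mem_smul_iff p _ x, ?_⟩
  · refine Submodule.mem_sup_left ?_
    have h := hx
    rw [LhatDef_eq_IhatDef] at h
    have := lie_IhatDef_LhatDef p le_rfl hnil h hy
    rwa [← LhatDef_eq_IhatDef] at this
  · have h := lie_IhatDef_LhatDef p hIL hnil hpx hy
    rwa [padicInt_smul_eq, smul_lie, ← padicInt_smul_eq, smul_mem_smul_iff] at h
  · exact lie_IhatDef_LhatDef p hIL hnil ((smul_mem_smul_iff p _ x).1 hpx) hy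
  · have hle : ((p : ℤ_[p]) • IhatDef p M I L c).comap (LhatDef p M L c).subtype ≤
        (IhatDef p M I L c).comap (LhatDef p M L c).subtype :=
      Submodule.comap_mono (Submodule.smul_le_self_of_tower _ _)
    exact ⟨Submodule.quotientQuotientEquivQuotient _ _ hle, fun x => rfl⟩
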